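/- Let p be a prime, m ∈ ℕ with 0 < m < p, α₀ := m/p, α₁ ∈ (α₀, 1), and M the PI-RAPPOR randomizer. Let n ∈ ℕ, let x₁, …, x_n be nonzero elements of ZMod p, and for nonzero j ∈ ZMod p let c_j := #{i ∈ [n] : x_i = j}. Let (Ω, P) be a probability space and φ¹, …, φⁿ : Ω → (ZMod p)² be independent random variables with φ^i distributed according to M_{x_i}. Define the estimator c̃_j := Σ_{i=1}^{n} (bool(φ^i₀ + j·φ^i₁) − α₀)/(α₁ − α₀). Then for every nonzero j ∈ ZMod p: E[c̃_j] = c_j, and Var[c̃_j] = c_j·(1 − α₀ − α₁)/(α₁ − α₀) + n·α₀·(1 − α₀)/(α₁ − α₀)². -/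

import Mathlib

open Finset MeasureTheory

/-!
If the report `a` is drawn from `M_k`, then `a.1 + k * a.2` lands in the accepted set `S` with
probability `α₁`. For `j ≠ k` the map `a ↦ (a.1 + k * a.2, a.1 + j * a.2)` is a bijection, so
`a.1 + j * a.2` is uniform and lands in `S` with probability `α₀ = #S / #K`. The indicators counted
by the estimator are therefore independent Bernoulli variables with parameter `α₁` or `α₀`, and the
variance follows from `α₁ (1 - α₁) - α₀ (1 - α₀) = (α₁ - α₀) (1 - α₀ - α₁)`.
-/

section LinearHash

variable {R A : Type*} [Ring R]

lemma injective_add_mul_prod_add_mul {k j : R} (h : IsLeftRegular (k - j)) :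
    Function.Injective fun a : R × R => (a.1 + k * a.2, a.1 + j * a.2) := by
  rintro ⟨a, b⟩ ⟨a', b'⟩ hab
  obtain ⟨hk, hj⟩ := Prod.mk.inj hab
  have hb : b = b' := h <| by
    calc (k - j) * b = (a + k * b) - (a + j * b) := by noncomm_ring
      _ = (a' + k * b') - (a' + j * b') := by rw [hk, hj]
      _ = (k - j) * b' := by noncomm_ring
  subst hb
  simpa using hk

variable [Fintype R]

lemma sum_comp_add_mul [AddCommMonoid A] (f : R → A) (j : R) :
    ∑ a : R × R, f (a.1 + j * a.2) = Fintype.card R • ∑ z, f z := by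
  have sum_translate (b : R) : ∑ z, f (z + j * b) = ∑ z, f z :=
    Equiv.sum_comp (Equiv.addRight (j * b)) f
  simp only [Fintype.sum_prod_type_right, sum_translate, sum_const, card_univ]

lemma sum_comp_add_mul_mul_comp_add_mul [NonUnitalNonAssocSemiring A] {k j : R}
    (h : IsLeftRegular (k - j)) (f g : R → A) :
    ∑ a : R × R, f (a.1 + k * a.2) * g (a.1 + j * a.2) = (∑ z, f z) * ∑ z, g z := by
  rw [sum_mul_sum, ← Fintype.sum_prod_type']
  exact (Finite.injective_iff_bijective.1 (injective_add_mul_prod_add_mul h)).sum_comp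
    fun a => f a.1 * g a.2

end LinearHash

section Probability

open ProbabilityTheory

variable {Ω : Type*} [MeasurableSpace Ω] {P : Measure Ω}

section JointMass

variable {ι : Type*} [Fintype ι] {E : ι → Type*} [∀ i, MeasurableSpace (E i)]
  [∀ i, MeasurableSingletonClass (E i)] {X : ∀ i, Ω → E i} {w : ∀ i, E i → ℝ}

lemma real_forall_mem_eq_prod_sum [IsFiniteMeasure P] (hX : ∀ i, Measurable (X i))
    (hjoint : ∀ f : ∀ i, E i, P.real {ω | ∀ i, X i ω = f i} = ∏ i, w i (f i))
    (t : ∀ i, Finset (E i)) :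
    P.real {ω | ∀ i, X i ω ∈ t i} = ∏ i, ∑ a ∈ t i, w i a := by
  classical
  have hmeas : Measurable fun ω i => X i ω := measurable_pi_lambda _ hX
  calc P.real {ω | ∀ i, X i ω ∈ t i}
      = P.real ((fun ω i => X i ω) ⁻¹' Fintype.piFinset t) := by
        congr 1
        ext ω
        simp
    _ = ∑ f ∈ Fintype.piFinset t, P.real ((fun ω i => X i ω) ⁻¹' {f}) :=
        (sum_measureReal_preimage_singleton _ fun f _ => hmeas (measurableSet_singleton f)).symm
    _ = ∑ f ∈ Fintype.piFinset t, ∏ i, w i (f i) := by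
        simp only [← hjoint, Set.preimage, Set.mem_singleton_iff, funext_iff]
    _ = ∏ i, ∑ a ∈ t i, w i a := (prod_univ_sum t w).symm

variable [∀ i, Fintype (E i)]

lemma real_preimage_singleton_of_joint [IsFiniteMeasure P] (hX : ∀ i, Measurable (X i))
    (hw : ∀ i, ∑ a, w i a = 1)
    (hjoint : ∀ f : ∀ i, E i, P.real {ω | ∀ i, X i ω = f i} = ∏ i, w i (f i))
    (i : ι) (a : E i) : P.real (X i ⁻¹' {a}) = w i a := by
  classical
  let t : ∀ k, Finset (E k) := Function.update (fun _ => univ) i {a}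
  have preimage_eq : X i ⁻¹' {a} = {ω | ∀ k, X k ω ∈ t k} := by
    ext ω
    simp [t, Function.forall_update_iff (fun _ => univ) fun k s => X k ω ∈ s]
  rw [preimage_eq, real_forall_mem_eq_prod_sum hX hjoint, prod_eq_single i _ (by simp)]
  · simp [t]
  · intro k _ hk
    simp [t, hk, hw]

lemma iIndepFun_of_joint [IsProbabilityMeasure P] (hX : ∀ i, Measurable (X i))
    (hw : ∀ i, ∑ a, w i a = 1)
    (hjoint : ∀ f : ∀ i, E i, P.real {ω | ∀ i, X i ω = f i} = ∏ i, w i (f i)) :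
    iIndepFun X P := by
  have hmeas : Measurable fun ω i => X i ω := measurable_pi_lambda _ hX
  have (i : ι) : IsProbabilityMeasure (P.map (X i)) :=
    Measure.isProbabilityMeasure_map (hX i).aemeasurable
  rw [iIndepFun_iff_map_fun_eq_pi_map fun i => (hX i).aemeasurable]
  refine Measure.ext_of_measureReal_singleton fun f => ?_
  calc (P.map fun ω i => X i ω).real {f} = P.real {ω | ∀ i, X i ω = f i} := by
        simp only [map_measureReal_apply hmeas (measurableSet_singleton f), Set.preimage,
          Set.mem_singleton_iff, funext_iff]
    _ = ∏ i, P.real (X i ⁻¹' {f i}) := by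
        simp only [hjoint, real_preimage_singleton_of_joint hX hw hjoint]
    _ = (Measure.pi fun i => P.map (X i)).real {f} := by
        simp only [measureReal_def, Measure.pi_singleton, ENNReal.toReal_prod,
          Measure.map_apply (hX _) (measurableSet_singleton _)]

end JointMass

lemma variance_indicator_one [IsProbabilityMeasure P] {A : Set Ω} (hA : MeasurableSet A) :
    Var[A.indicator 1; P] = P.real A * (1 - P.real A) := by
  have indicator_sq : (A.indicator 1 : Ω → ℝ) ^ 2 = A.indicator 1 := by
    ext ω
    by_cases hω : ω ∈ A <;> simp [hω]
  have memLp_indicator : MemLp (A.indicator (1 : Ω → ℝ)) 2 P :=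
    memLp_indicator_const 2 hA 1 (by simp)
  rw [variance_eq_sub memLp_indicator, indicator_sq, integral_indicator_one hA]
  ring

lemma indepFun_indicator_one_of_indepSet {A B : Set Ω} (h : IndepSet A B P) :
    IndepFun (A.indicator (1 : Ω → ℝ)) (B.indicator (1 : Ω → ℝ)) P := by
  have comap_le (C : Set Ω) : MeasurableSpace.comap (C.indicator (1 : Ω → ℝ)) inferInstance ≤
      MeasurableSpace.generateFrom {C} :=
    Measurable.comap_le <| (measurable_const (a := (1 : ℝ))).indicator
      (MeasurableSpace.measurableSet_generateFrom rfl)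
  exact indep_of_indep_of_le h (comap_le A) (comap_le B)

section DebiasedCount

variable {α₀ α₁ : ℝ}

/-- The indicator of the event `A`, rescaled affinely so that its mean is `1` if `A` has probability
`α₁` and `0` if `A` has probability `α₀`. -/
noncomputable def debiasedIndicator (α₀ α₁ : ℝ) (A : Set Ω) (ω : Ω) : ℝ :=
  (A.indicator 1 ω - α₀) / (α₁ - α₀)

lemma memLp_debiasedIndicator [IsFiniteMeasure P] {A : Set Ω} (hA : MeasurableSet A) :
    MemLp (debiasedIndicator α₀ α₁ A) 2 P := by
  unfold debiasedIndicator
  simp only [div_eq_mul_inv]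
  exact ((memLp_indicator_const 2 hA (1 : ℝ) (by simp)).sub (memLp_const α₀)).mul_const _

lemma integral_debiasedIndicator [IsProbabilityMeasure P] {A : Set Ω} (hA : MeasurableSet A) :
    ∫ ω, debiasedIndicator α₀ α₁ A ω ∂P = (P.real A - α₀) / (α₁ - α₀) := by
  have integrable_indicator : Integrable (A.indicator (1 : Ω → ℝ)) P :=
    (integrable_const 1).indicator hA
  unfold debiasedIndicator
  rw [integral_div, integral_sub integrable_indicator (integrable_const α₀),
    integral_indicator_one hA, integral_const, probReal_univ, one_smul]

lemma variance_debiasedIndicator [IsProbabilityMeasure P] {A : Set Ω} (hA : MeasurableSet A) :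
    Var[debiasedIndicator α₀ α₁ A; P] = P.real A * (1 - P.real A) / (α₁ - α₀) ^ 2 := by
  have aestronglyMeasurable_indicator : AEStronglyMeasurable (A.indicator (1 : Ω → ℝ)) P :=
    (measurable_one.indicator hA).aestronglyMeasurable
  unfold debiasedIndicator
  simp only [div_eq_mul_inv]
  rw [variance_mul_const, variance_sub_const aestronglyMeasurable_indicator,
    variance_indicator_one hA, inv_pow]

lemma indepFun_debiasedIndicator {A B : Set Ω} (h : IndepSet A B P) :
    IndepFun (debiasedIndicator α₀ α₁ A) (debiasedIndicator α₀ α₁ B) P := by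
  have measurable_debias : Measurable fun y : ℝ => (y - α₀) / (α₁ - α₀) := by fun_prop
  exact (indepFun_indicator_one_of_indepSet h).comp measurable_debias measurable_debias

variable {ι : Type*} [Fintype ι] {A : ι → Set Ω} {q : ι → Prop} [DecidablePred q]

/-- The unbiased estimate of the number of indices `i` for which `A i` has probability `α₁`, when
each of the remaining events has probability `α₀`. -/
noncomputable def debiasedCount (α₀ α₁ : ℝ) (A : ι → Set Ω) : Ω → ℝ :=
  ∑ i, debiasedIndicator α₀ α₁ (A i)

lemma memLp_debiasedCount [IsFiniteMeasure P] (hA : ∀ i, MeasurableSet (A i)) :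
    MemLp (debiasedCount α₀ α₁ A) 2 P :=
  memLp_finsetSum' _ fun i _ => memLp_debiasedIndicator (hA i)

lemma integral_debiasedCount [IsProbabilityMeasure P] (hα : α₀ ≠ α₁)
    (hA : ∀ i, MeasurableSet (A i)) (hP : ∀ i, P.real (A i) = if q i then α₁ else α₀) :
    ∫ ω, debiasedCount α₀ α₁ A ω ∂P = #{i | q i} := by
  have hα' : α₁ - α₀ ≠ 0 := sub_ne_zero.2 hα.symm
  calc ∫ ω, debiasedCount α₀ α₁ A ω ∂P
      = ∑ i, ∫ ω, debiasedIndicator α₀ α₁ (A i) ω ∂P := by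
        simp only [debiasedCount, Finset.sum_apply]
        exact integral_finsetSum _ fun i _ =>
          (memLp_debiasedIndicator (hA i)).integrable one_le_two
    _ = ∑ i, if q i then 1 else 0 := by
        refine sum_congr rfl fun i _ => ?_
        rw [integral_debiasedIndicator (hA i), hP]
        split_ifs <;> simp [hα']
    _ = #{i | q i} := sum_boole _ _

lemma variance_debiasedCount [IsProbabilityMeasure P] (hα : α₀ ≠ α₁)
    (hA : ∀ i, MeasurableSet (A i)) (hindep : Pairwise fun i k => IndepSet (A i) (A k) P)
    (hP : ∀ i, P.real (A i) = if q i then α₁ else α₀) :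
    Var[debiasedCount α₀ α₁ A; P] =
      #{i | q i} * (1 - α₀ - α₁) / (α₁ - α₀) +
        Fintype.card ι * (α₀ * (1 - α₀)) / (α₁ - α₀) ^ 2 := by
  have hα' : α₁ - α₀ ≠ 0 := sub_ne_zero.2 hα.symm
  calc Var[debiasedCount α₀ α₁ A; P] = ∑ i, Var[debiasedIndicator α₀ α₁ (A i); P] :=
        IndepFun.variance_sum (fun i _ => memLp_debiasedIndicator (hA i))
          fun i _ k _ hik => indepFun_debiasedIndicator (hindep hik)
    _ = ∑ i, ((if q i then 1 else 0) * ((1 - α₀ - α₁) / (α₁ - α₀)) +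
          α₀ * (1 - α₀) / (α₁ - α₀) ^ 2) := by
        refine sum_congr rfl fun i _ => ?_
        rw [variance_debiasedIndicator (hA i), hP]
        split_ifs
        · field_simp
          ring
        · ring
    _ = _ := by
        rw [sum_add_distrib, ← sum_mul, sum_boole, sum_const, card_univ, nsmul_eq_mul]
        ring

end DebiasedCount

end Probability

section PiRappor

open ProbabilityTheory

variable {K : Type*} [Fintype K] [DecidableEq K] {S : Finset K} {α₁ : ℝ}

/-- The factor of the PI-RAPPOR mass function that depends on the hash value `z`, for a set `S` of
accepted values: mass `α₁ / #K` is spread evenly over `S` and `(1 - α₁) / #K` over its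
complement. -/
noncomputable def piRapporWeight (S : Finset K) (α₁ : ℝ) (z : K) : ℝ :=
  if z ∈ S then α₁ / (#S * Fintype.card K) else (1 - α₁) / ((Fintype.card K - #S) * Fintype.card K)

lemma sum_mem_piRapporWeight (hS : S.Nonempty) :
    ∑ z ∈ S, piRapporWeight S α₁ z = α₁ / Fintype.card K := by
  have hS' : (#S : ℝ) ≠ 0 := by exact_mod_cast hS.card_ne_zero
  calc ∑ z ∈ S, piRapporWeight S α₁ z = ∑ _z ∈ S, α₁ / (#S * Fintype.card K) :=
        sum_congr rfl fun z hz => if_pos hz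
    _ = α₁ / Fintype.card K := by
      rw [sum_const, nsmul_eq_mul]
      field_simp

lemma sum_piRapporWeight (hS : S.Nonempty) (hS' : S ≠ univ) :
    ∑ z, piRapporWeight S α₁ z = 1 / Fintype.card K := by
  have hcompl : (Fintype.card K : ℝ) - #S ≠ 0 :=
    sub_ne_zero.2 <| by exact_mod_cast ((card_lt_iff_ne_univ S).2 hS').ne'
  have sum_compl_weight : ∑ z ∈ Sᶜ, piRapporWeight S α₁ z = (1 - α₁) / Fintype.card K := by
    calc ∑ z ∈ Sᶜ, piRapporWeight S α₁ z
        = ∑ _z ∈ Sᶜ, (1 - α₁) / ((Fintype.card K - #S) * Fintype.card K) :=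
          sum_congr rfl fun z hz => if_neg (mem_compl.1 hz)
      _ = (1 - α₁) / Fintype.card K := by
        rw [sum_const, nsmul_eq_mul, card_compl, Nat.cast_sub (card_le_univ S)]
        field_simp
  rw [← sum_add_sum_compl S, sum_mem_piRapporWeight hS, sum_compl_weight]
  ring

/-- The probability mass function `M_j` of the PI-RAPPOR randomizer on input `j`, for a set `S` of
accepted hash values; the paper's randomizer has `K = ZMod p` and `S = {z | z.val < m}`. -/
noncomputable def piRapporMass [Ring K] (S : Finset K) (α₁ : ℝ) (j : K) (a : K × K) : ℝ :=
  piRapporWeight S α₁ (a.1 + j * a.2)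

lemma sum_piRapporMass [Ring K] (hS : S.Nonempty) (hS' : S ≠ univ) (j : K) :
    ∑ a, piRapporMass S α₁ j a = 1 := by
  unfold piRapporMass
  rw [sum_comp_add_mul, sum_piRapporWeight hS hS', nsmul_eq_mul,
    mul_one_div_cancel (Nat.cast_ne_zero.2 Fintype.card_ne_zero)]

lemma sum_filter_piRapporMass_self [Ring K] (hS : S.Nonempty) (j : K) :
    ∑ a : K × K with a.1 + j * a.2 ∈ S, piRapporMass S α₁ j a = α₁ := by
  unfold piRapporMass
  rw [sum_filter, sum_comp_add_mul (fun z => if z ∈ S then piRapporWeight S α₁ z else 0),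
    sum_ite_mem, univ_inter, sum_mem_piRapporWeight hS, nsmul_eq_mul,
    mul_div_cancel₀ _ (Nat.cast_ne_zero.2 Fintype.card_ne_zero)]

lemma sum_filter_piRapporMass_of_isLeftRegular [Ring K] (hS : S.Nonempty) (hS' : S ≠ univ)
    {k j : K} (h : IsLeftRegular (k - j)) :
    ∑ a : K × K with a.1 + j * a.2 ∈ S, piRapporMass S α₁ k a = #S / Fintype.card K := by
  calc ∑ a : K × K with a.1 + j * a.2 ∈ S, piRapporMass S α₁ k a
      = ∑ a : K × K, piRapporWeight S α₁ (a.1 + k * a.2) *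
          (if a.1 + j * a.2 ∈ S then 1 else 0) := by
        simp only [sum_filter, mul_ite, mul_one, mul_zero, piRapporMass]
    _ = (∑ z, piRapporWeight S α₁ z) * ∑ z, if z ∈ S then 1 else 0 :=
        sum_comp_add_mul_mul_comp_add_mul h _ fun z => if z ∈ S then 1 else 0
    _ = #S / Fintype.card K := by
        rw [sum_piRapporWeight hS hS', sum_boole, filter_univ_mem, one_div_mul_eq_div]

/-- The estimator `c̃_j` of the number of users holding `j`: a report `φ i` counts as a vote for `j`
if its hash value at `j` is accepted, and the votes are debiased. -/
noncomputable def piRapporEstimator {Ω ι K : Type*} [Fintype ι] [Ring K] (S : Finset K) (α₀ α₁ : ℝ)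
    (φ : ι → Ω → K × K) (j : K) : Ω → ℝ :=
  debiasedCount α₀ α₁ fun i => {ω | (φ i ω).1 + j * (φ i ω).2 ∈ S}

theorem stmt_15_general {Ω : Type*} [MeasurableSpace Ω] {P : Measure Ω}
    [IsProbabilityMeasure P] {K : Type*} [Field K] [Fintype K] [DecidableEq K]
    [MeasurableSpace (K × K)] [MeasurableSingletonClass (K × K)]
    {S : Finset K} (hS : S.Nonempty) (hS' : S ≠ univ)
    {α₀ α₁ : ℝ} (hα₀ : α₀ = #S / Fintype.card K) (hα : α₀ ≠ α₁)
    {ι : Type*} [Fintype ι] {x : ι → K} {φ : ι → Ω → K × K} (hφ : ∀ i, Measurable (φ i))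
    (hindep : Pairwise fun i k => IndepFun (φ i) (φ k) P)
    (hlaw : ∀ i a, P.real (φ i ⁻¹' {a}) = piRapporMass S α₁ (x i) a) (j : K) :
    MemLp (piRapporEstimator S α₀ α₁ φ j) 2 P ∧
      ∫ ω, piRapporEstimator S α₀ α₁ φ j ω ∂P = #{i | x i = j} ∧
      Var[piRapporEstimator S α₀ α₁ φ j; P] =
        #{i | x i = j} * (1 - α₀ - α₁) / (α₁ - α₀) +
          Fintype.card ι * (α₀ * (1 - α₀)) / (α₁ - α₀) ^ 2 := by
  let T : Finset (K × K) := {a | a.1 + j * a.2 ∈ S}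
  have preimage_T (i : ι) : {ω | (φ i ω).1 + j * (φ i ω).2 ∈ S} = φ i ⁻¹' T := by
    ext ω
    simp [T]
  have hmeas (i : ι) : MeasurableSet (φ i ⁻¹' T) := hφ i T.measurableSet
  have hprob (i : ι) : P.real (φ i ⁻¹' T) = if x i = j then α₁ else α₀ := by
    rw [← sum_measureReal_preimage_singleton _ fun a _ => hφ i (measurableSet_singleton a)]
    simp only [hlaw]
    split_ifs with hx
    · rw [hx, sum_filter_piRapporMass_self hS]
    · rw [hα₀, sum_filter_piRapporMass_of_isLeftRegular hS hS'
        (IsLeftCancelMulZero.mul_left_cancel_of_ne_zero (sub_ne_zero.2 hx))]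
  simp only [piRapporEstimator, preimage_T]
  refine ⟨memLp_debiasedCount hmeas, integral_debiasedCount hα hmeas hprob,
    variance_debiasedCount hα hmeas ?_ hprob⟩
  intro i k hik
  exact (indepSet_iff_measure_inter_eq_mul (hmeas i) (hmeas k) P).2
    ((hindep hik).measure_inter_preimage_eq_mul _ _ T.measurableSet T.measurableSet)

end PiRappor

section ZMod

variable {n m : ℕ} [NeZero n]

lemma card_zmod_val_lt (hmn : m ≤ n) : #{z : ZMod n | z.val < m} = m := by
  obtain _ | n := n
  · exact absurd rfl (NeZero.ne 0)
  · exact Fin.card_filter_val_lt.trans (min_eq_right hmn)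

lemma piRapporMass_zmod (hmn : m ≤ n) (α₁ : ℝ) (j : ZMod n) (a : ZMod n × ZMod n) :
    piRapporMass {z | z.val < m} α₁ j a =
      if (a.1 + j * a.2).val < m then α₁ / (m * n) else (1 - α₁) / ((n - m) * n) := by
  simp only [piRapporMass, piRapporWeight, mem_filter_univ, card_zmod_val_lt hmn, ZMod.card]

lemma piRapporEstimator_zmod_apply {Ω ι : Type*} [Fintype ι] (m : ℕ) (α₀ α₁ : ℝ)
    (φ : ι → Ω → ZMod n × ZMod n) (j : ZMod n) (ω : Ω) :
    piRapporEstimator {z | z.val < m} α₀ α₁ φ j ω =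
      ∑ i, ((if ((φ i ω).1 + j * (φ i ω).2).val < m then 1 else 0) - α₀) / (α₁ - α₀) := by
  simp [piRapporEstimator, debiasedCount, debiasedIndicator, Set.indicator_apply]

end ZMod

/-- **Unbiasedness and variance of the PI-RAPPOR frequency estimator.**
With `n` users holding nonzero inputs `x₁,…,x_n ∈ ZMod p`, independent reports
`φ¹,…,φⁿ` with `φ^i ~ M_{x_i}` (their joint law is the product of the `M_{x_i}`), and
estimator `c̃_j = ∑_i (bool(φ^i₀ + j·φ^i₁) − α₀)/(α₁ − α₀)`, we have `E[c̃_j] = c_j` and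
`Var[c̃_j] = c_j·(1 − α₀ − α₁)/(α₁ − α₀) + n·α₀(1 − α₀)/(α₁ − α₀)²` for every nonzero `j`. -/
theorem stmt_15 (p : ℕ) [Fact p.Prime] (m : ℕ) (hm0 : 0 < m) (hmp : m < p)
    (α₀ α₁ : ℝ) (hα₀ : α₀ = (m : ℝ) / p) (hα₁ : α₀ < α₁) (hα₁' : α₁ < 1)
    (M : ZMod p → ZMod p × ZMod p → ℝ)
    (hM : ∀ j φ, M j φ =
      if (φ.1 + j * φ.2).val < m then α₁ / (m * p) else (1 - α₁) / ((p - m) * p))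
    (n : ℕ) (x : Fin n → ZMod p) (hx : ∀ i, x i ≠ 0)
    {Ω : Type*} [MeasurableSpace Ω] (P : Measure Ω) [IsProbabilityMeasure P]
    [MeasurableSpace (ZMod p × ZMod p)] [MeasurableSingletonClass (ZMod p × ZMod p)]
    (φ : Fin n → Ω → ZMod p × ZMod p) (hmeas : ∀ i, Measurable (φ i))
    (hjoint : ∀ f : Fin n → ZMod p × ZMod p,
      (P {ω | ∀ i, φ i ω = f i}).toReal = ∏ i, M (x i) (f i))
    (c : ZMod p → ℕ) (hc : ∀ j, c j = (univ.filter fun i => x i = j).card)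
    (ctil : ZMod p → Ω → ℝ)
    (hctil : ∀ j ω, ctil j ω =
      ∑ i, ((if ((φ i ω).1 + j * (φ i ω).2).val < m then (1 : ℝ) else 0) - α₀) / (α₁ - α₀)) :
    ∀ j : ZMod p, j ≠ 0 →
      (∫ ω, ctil j ω ∂P) = c j ∧
      (∫ ω, (ctil j ω - c j) ^ 2 ∂P) =
        c j * (1 - α₀ - α₁) / (α₁ - α₀) + n * (α₀ * (1 - α₀)) / (α₁ - α₀) ^ 2 := by
  intro j _
  let S : Finset (ZMod p) := {z | z.val < m}
  have hcard : #S = m := card_zmod_val_lt hmp.le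
  have hS : S.Nonempty := card_pos.1 (hcard ▸ hm0)
  have hS' : S ≠ univ := (card_lt_iff_ne_univ S).1 (by rwa [hcard, ZMod.card])
  obtain rfl : M = piRapporMass S α₁ := by
    ext k a
    rw [hM, piRapporMass_zmod hmp.le]
  obtain rfl : ctil = piRapporEstimator S α₀ α₁ φ := by
    ext k ω
    rw [hctil, piRapporEstimator_zmod_apply]
  have hsum (i : Fin n) := sum_piRapporMass (α₁ := α₁) hS hS' (x i)
  obtain ⟨hmemLp, hmean, hvar⟩ := stmt_15_general hS hS'
    (by rw [hα₀, hcard, ZMod.card]) hα₁.ne hmeas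
    (fun i k hik => (iIndepFun_of_joint hmeas hsum hjoint).indepFun hik)
    (real_preimage_singleton_of_joint hmeas hsum hjoint) j
  rw [ProbabilityTheory.variance_eq_integral hmemLp.aemeasurable, hmean, Fintype.card_fin] at hvar
  rw [hc]
  exact ⟨hmean, hvar⟩
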